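/- Let K be a field, g ∈ K[x] monic of positive degree, and f ∈ K[x] with deg(f) < deg(g), and let I be the ideal of K[x,y] generated by y − f(x) and g(x), whose reduced minimal lexicographic Gröbner basis (for x ≺ y) is (y − f, g). Then the associated detaching sequence satisfies A_0 = g, A_1 = y − f, and A_i = y^i − (f^i mod g) for all i ≥ 2, where f^i mod g denotes the remainder of the Euclidean division of f^i by g in K[x]. -/

import Mathlib

noncomputable section

open Polynomial

/-- Bivariate polynomials `k[x][y]`: the inner `X` is `x`, the outer `X` is `y`. -/
abbrev Biv (k : Type*) [CommRing k] : Type _ := Polynomial (Polynomial k)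

variable {k : Type*} [CommRing k]

/-- The leading monomial of `f`, as the pair (y-exponent, x-exponent), for the
lexicographic order induced by `x ≺ y`. -/
def lmon (f : Biv k) : ℕ × ℕ := (f.natDegree, f.leadingCoeff.natDegree)

/-- Divisibility of monomials: `x^{p.2} y^{p.1}` divides `x^{q.2} y^{q.1}`. -/
def monDvd (p q : ℕ × ℕ) : Prop := p.1 ≤ q.1 ∧ p.2 ≤ q.2

/-- Lexicographic comparison of monomials, `y`-exponent first. -/
def monLt (p q : ℕ × ℕ) : Prop := p.1 < q.1 ∨ (p.1 = q.1 ∧ p.2 < q.2)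

/-- The monomial `x^{m.2} y^{m.1}` occurs in `f` (has a nonzero coefficient). -/
def occursIn (f : Biv k) (m : ℕ × ℕ) : Prop := (f.coeff m.1).coeff m.2 ≠ 0

/-- `G` is a Gröbner basis of `I` for the lexicographic order with `x ≺ y`:
its elements are nonzero elements of `I`, and the leading monomial of any nonzero
element of `I` is divisible by the leading monomial of some element of `G`. -/
def IsGB (G : List (Biv k)) (I : Ideal (Biv k)) : Prop :=
  (∀ g ∈ G, g ≠ 0 ∧ g ∈ I) ∧
  ∀ f ∈ I, f ≠ 0 → ∃ g ∈ G, monDvd (lmon g) (lmon f)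

/-- `f` is monic w.r.t. lex `x ≺ y`: the coefficient of its leading monomial is `1`. -/
def lexMonic (f : Biv k) : Prop := f.leadingCoeff.Monic

/-- `g 0, …, g s` is the reduced minimal lexicographic Gröbner basis of `I`,
listed in decreasing order of leading monomials. -/
def IsReducedGB {s : ℕ} (g : Fin (s + 1) → Biv k) (I : Ideal (Biv k)) : Prop :=
  IsGB (List.ofFn g) I ∧
  (∀ j, lexMonic (g j)) ∧
  (∀ j l, j ≠ l → ∀ m : ℕ × ℕ, occursIn (g j) m → ¬ monDvd (lmon (g l)) m) ∧
  (∀ j l : Fin (s + 1), j < l → monLt (lmon (g l)) (lmon (g j)))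

/-- Every monomial of `f` of `y`-degree `< i` is reduced w.r.t. the family `g`. -/
def reducedBelow {s : ℕ} (g : Fin (s + 1) → Biv k) (i : ℕ) (f : Biv k) : Prop :=
  ∀ m : ℕ × ℕ, m.1 < i → occursIn f m → ∀ j, ¬ monDvd (lmon (g j)) m

/-- `A` is the detaching sequence associated to the reduced Gröbner basis `g` of `I`:
`A i = 0` for `i < n_s`, `A (n_j) = g j`, and otherwise `A i` is obtained from
`y * A (i-1)` by reducing the terms of `y`-degree `< i` modulo `g`
(so `A i - y * A (i-1)` lies in `I` and has `y`-degree `< i`, and the part of `A i`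
of `y`-degree `< i` is reduced w.r.t. `g`). -/
def IsDetachingSeq {s : ℕ} (g : Fin (s + 1) → Biv k) (I : Ideal (Biv k))
    (A : ℕ → Biv k) : Prop :=
  (∀ i, i < (g (Fin.last s)).natDegree → A i = 0) ∧
  (∀ j, A ((g j).natDegree) = g j) ∧
  (∀ i, (g (Fin.last s)).natDegree ≤ i → (∀ j, (g j).natDegree ≠ i) →
    (A i - Polynomial.X * A (i - 1)) ∈ I ∧
    (A i - Polynomial.X * A (i - 1)).degree < (i : WithBot ℕ) ∧
    reducedBelow g i (A i))

/-!
Every `A i` of a detaching sequence lies in `I`, and past the degree of a basis element that is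
monic in `y` it is monic of degree `i` in `y`. For the pair `(y - f, g)`, the reducedness condition
removes all terms of `y`-degree strictly between `0` and `i`, so `A i = y ^ i + c` with
`deg c < deg g`. Evaluating at `y = f` maps `I` into `(g)`, hence `c ≡ -f ^ i` modulo `g`, and the
degree bound forces `c = -(f ^ i mod g)`.
-/

theorem dvd_eval_of_mem_span_X_sub_C_C {R : Type*} [CommRing R] {a b : R} {p : R[X]}
    (hp : p ∈ Ideal.span {X - C a, C b}) : b ∣ p.eval a := by
  obtain ⟨u, v, rfl⟩ := Ideal.mem_span_pair.mp hp
  simp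

theorem eq_neg_modByMonic_of_dvd_add {R : Type*} [CommRing R] {a c g : R[X]} (hg : g.Monic)
    (hc : c.degree < g.degree) (h : g ∣ a + c) : c = -(a %ₘ g) := by
  nontriviality R
  have hmod : a %ₘ g = -c %ₘ g := modByMonic_eq_of_dvd_sub hg (by rwa [sub_neg_eq_add])
  rw [hmod, (modByMonic_eq_self_iff hg).2 (by rwa [degree_neg]), neg_neg]

theorem eq_X_pow_add_C_of_coeff_eq_zero {R : Type*} [Semiring R] {p : R[X]} (hp : p.Monic)
    (hpos : 0 < p.natDegree) (h : ∀ n, 0 < n → n < p.natDegree → p.coeff n = 0) :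
    p = X ^ p.natDegree + C (p.coeff 0) := by
  ext n
  rw [coeff_add, coeff_X_pow, coeff_C]
  rcases n.eq_zero_or_pos with rfl | hn
  · simp [hpos.ne]
  rcases lt_trichotomy n p.natDegree with hlt | rfl | hgt
  · simp [h n hn hlt, hlt.ne, hn.ne']
  · simp [hp.coeff_natDegree, hn.ne']
  · simp [coeff_eq_zero_of_natDegree_lt hgt, hgt.ne', hn.ne']

theorem reducedBelow.degree_coeff_lt {s : ℕ} {g : Fin (s + 1) → Biv k} {i n : ℕ} {p : Biv k}
    (hp : reducedBelow g i p) {j : Fin (s + 1)} (hj : g j ≠ 0) (hjn : (g j).natDegree ≤ n)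
    (hni : n < i) : (p.coeff n).degree < (g j).leadingCoeff.degree := by
  rw [degree_eq_natDegree (leadingCoeff_ne_zero.2 hj), degree_lt_iff_coeff_zero]
  intro l hl
  by_contra hne
  exact hp (n, l) hni hne j ⟨hjn, hl⟩

theorem reducedBelow.coeff_eq_zero [Nontrivial k] {s : ℕ} {g : Fin (s + 1) → Biv k} {i n : ℕ}
    {p : Biv k} (hp : reducedBelow g i p) {j : Fin (s + 1)} (hj : (g j).Monic)
    (hjn : (g j).natDegree ≤ n) (hni : n < i) : p.coeff n = 0 := by
  have hdeg := hp.degree_coeff_lt hj.ne_zero hjn hni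
  rwa [hj.leadingCoeff, degree_one, Nat.WithBot.lt_zero_iff, degree_eq_bot] at hdeg

namespace IsDetachingSeq

variable {s : ℕ} {g : Fin (s + 1) → Biv k} {I : Ideal (Biv k)} {A : ℕ → Biv k}

theorem mem (hA : IsDetachingSeq g I A) (hg : ∀ j, g j ∈ I) (i : ℕ) : A i ∈ I := by
  obtain ⟨hzero, hbasis, hstep⟩ := hA
  induction i using Nat.strong_induction_on with | _ i ih
  rcases lt_or_ge i (g (Fin.last s)).natDegree with hlt | hge
  · exact hzero i hlt ▸ I.zero_mem
  by_cases hi : ∃ j, (g j).natDegree = i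
  · obtain ⟨j, rfl⟩ := hi
    exact (hbasis j).symm ▸ hg j
  · push Not at hi
    have hpos : 0 < i := (Nat.zero_le _).trans_lt (hge.lt_of_ne (hi _))
    have hprev : X * A (i - 1) ∈ I := I.mul_mem_left X (ih _ (by lia))
    exact (I.sub_mem_iff_left hprev).1 (hstep i hge hi).1

theorem monic_and_natDegree_eq [Nontrivial k] (hA : IsDetachingSeq g I A) {j : Fin (s + 1)}
    (hj : (g j).Monic) (hmax : ∀ l, (g l).natDegree ≤ (g j).natDegree) {i : ℕ}
    (hi : (g j).natDegree ≤ i) : (A i).Monic ∧ (A i).natDegree = i := by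
  obtain ⟨-, hbasis, hstep⟩ := hA
  induction i, hi using Nat.le_induction with
  | base => exact (hbasis j).symm ▸ ⟨hj, rfl⟩
  | succ i hi ih =>
    obtain ⟨hmonic, hnatDegree⟩ := ih
    obtain ⟨-, hlower, -⟩ := hstep (i + 1) ((hmax _).trans (hi.trans i.le_succ))
      fun l => (Nat.lt_succ_of_le ((hmax l).trans hi)).ne
    rw [Nat.add_sub_cancel] at hlower
    have hX : (X * A i).Monic := monic_X.mul hmonic
    have hXdeg : (X * A i).natDegree = i + 1 := by rw [natDegree_X_mul hmonic.ne_zero, hnatDegree]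
    replace hlower : (A (i + 1) - X * A i).degree < (X * A i).degree := by
      rwa [degree_eq_natDegree hX.ne_zero, hXdeg]
    rw [← add_sub_cancel (X * A i) (A (i + 1))]
    exact ⟨hX.add_of_left hlower, (natDegree_add_eq_left_of_degree_lt hlower).trans hXdeg⟩

end IsDetachingSeq

theorem eq_X_pow_sub_C_of_reducedBelow [Nontrivial k] {f g : k[X]} (hg : g.Monic) {p : Biv k}
    (hp : p.Monic) (hpos : 0 < p.natDegree) (hmem : p ∈ Ideal.span {X - C f, C g})
    (hred : reducedBelow (s := 1) ![X - C f, C g] p.natDegree p) :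
    p = X ^ p.natDegree - C (f ^ p.natDegree %ₘ g) := by
  have hform : p = X ^ p.natDegree + C (p.coeff 0) :=
    eq_X_pow_add_C_of_coeff_eq_zero hp hpos fun n hn hlt =>
      hred.coeff_eq_zero (j := 0) (monic_X_sub_C f) ((natDegree_X_sub_C f).trans_le hn) hlt
  have hdeg : (p.coeff 0).degree < g.degree := by
    simpa using hred.degree_coeff_lt (j := 1) (C_ne_zero.2 hg.ne_zero) (natDegree_C g).le hpos
  have hdvd : g ∣ f ^ p.natDegree + p.coeff 0 := by
    have heval := dvd_eval_of_mem_span_X_sub_C_C hmem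
    rw [hform] at heval
    simpa using heval
  rw [sub_eq_add_neg, ← C_neg, ← eq_neg_modByMonic_of_dvd_add hg hdeg hdvd]
  exact hform

theorem detaching_seq_of_pair_general {R : Type*} [CommRing R] [Nontrivial R] {f g : R[X]}
    (hg : g.Monic) {A : ℕ → Biv R}
    (hA : IsDetachingSeq (s := 1) ![X - C f, C g] (Ideal.span {X - C f, C g}) A) :
    A 0 = C g ∧ A 1 = X - C f ∧ ∀ i, 2 ≤ i → A i = X ^ i - C (f ^ i %ₘ g) := by
  refine ⟨by simpa using hA.2.1 1, by simpa using hA.2.1 0, fun i hi => ?_⟩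
  have hmem : A i ∈ Ideal.span {X - C f, C g} :=
    hA.mem (Fin.forall_fin_two.2 ⟨Ideal.subset_span (by simp), Ideal.subset_span (by simp)⟩) i
  obtain ⟨hmonic, hnatDegree⟩ : (A i).Monic ∧ (A i).natDegree = i :=
    hA.monic_and_natDegree_eq (j := 0) (monic_X_sub_C f) (by simp [Fin.forall_fin_two])
      ((natDegree_X_sub_C f).trans_le (by lia))
  have hred : reducedBelow (s := 1) ![X - C f, C g] i (A i) :=
    (hA.2.2 i (by simp) (Fin.forall_fin_two.2
      ⟨(natDegree_X_sub_C f).trans_ne (by lia), (natDegree_C g).trans_ne (by lia)⟩)).2.2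
  simpa only [hnatDegree] using
    eq_X_pow_sub_C_of_reducedBelow hg hmonic (by lia) hmem (hnatDegree.symm ▸ hred)

/-- if `g ∈ K[x]` is monic of positive degree, `f ∈ K[x]` has degree
`< deg g`, and `I = ⟨y - f, g⟩` has `(y - f, g)` as its reduced minimal lexicographic
Gröbner basis, then the associated detaching sequence satisfies `A 0 = g`,
`A 1 = y - f` and `A i = y^i - (f^i mod g)` for all `i ≥ 2`. -/
theorem detaching_seq_of_pair {K : Type*} [Field K]
    (g f : Polynomial K) (hg : g.Monic) (hgd : 0 < g.natDegree)
    (hfd : f.degree < g.degree)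
    (I : Ideal (Biv K))
    (hI : I = Ideal.span {(Polynomial.X : Biv K) - Polynomial.C f, Polynomial.C g})
    (hGB : IsReducedGB (s := 1)
      ![(Polynomial.X : Biv K) - Polynomial.C f, Polynomial.C g] I)
    (A : ℕ → Biv K)
    (hA : IsDetachingSeq (s := 1)
      ![(Polynomial.X : Biv K) - Polynomial.C f, Polynomial.C g] I A) :
    A 0 = Polynomial.C g ∧
    A 1 = (Polynomial.X : Biv K) - Polynomial.C f ∧
    ∀ i, 2 ≤ i → A i = (Polynomial.X : Biv K) ^ i - Polynomial.C (f ^ i %ₘ g) := by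
  subst hI
  exact detaching_seq_of_pair_general hg hA
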